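/- arXiv:2310.19698 — 3 statements merged into one kernel-verified Lean document; each statement's English description precedes it below -/
import Mathlib

section
/- For every vocabulary size V > 0 and response length N_0 > 0, there exist a transformer (of the simplified decoder-only form described in the context) with vocabulary size V, context size N = 2N_0, embedding dimension d_e = V, a single attention block with two heads, a three-layer MLP, and an inverse temperature T > 0, such that for every map m : {1,...,V} → {1,...,V}^{N_0} and every user token X ∈ {1,...,V}, greedy autoregressive generation after the input consisting of the N_0 virtual tokens s_i = (m(1)_i/V, ..., m(V)_i/V) for i = 1,...,N_0 followed by the embedding of X produces exactly the response sequence (m(X)_1, ..., m(X)_{N_0}). -/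
open Matrix Real

/-- Softmax attention weight of query position `i` on key position `j` for one head with query
and key matrices `Wq, Wk` and inverse temperature `T`. -/
noncomputable def headAttn {k din p : ℕ} (T : ℝ)
    (Wq Wk : Matrix (Fin k) (Fin din) ℝ) (x : Fin p → Fin din → ℝ) (i j : Fin p) : ℝ :=
  exp (T / Real.sqrt k * (Wq.mulVec (x i) ⬝ᵥ Wk.mulVec (x j))) /
    ∑ r, exp (T / Real.sqrt k * (Wq.mulVec (x i) ⬝ᵥ Wk.mulVec (x r)))

/-- Output of a multi-head attention block at position `i`:
`t_i = Σ_h Σ_j A^h_{ij} W_V^h x_j`. -/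
noncomputable def attnBlock {k din dout p H : ℕ} (T : ℝ)
    (Wq Wk : Fin H → Matrix (Fin k) (Fin din) ℝ)
    (Wv : Fin H → Matrix (Fin dout) (Fin din) ℝ)
    (x : Fin p → Fin din → ℝ) (i : Fin p) : Fin dout → ℝ :=
  ∑ h, ∑ j, headAttn T (Wq h) (Wk h) x i j • (Wv h).mulVec (x j)

/-- One MLP layer: a linear map with bias, optionally ReLU-activated. -/
noncomputable def mlpLayer {a b : ℕ} (M : Matrix (Fin b) (Fin a) ℝ) (bias : Fin b → ℝ)
    (act : Bool) (x : Fin a → ℝ) : Fin b → ℝ :=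
  fun u => if act then max 0 (M.mulVec x u + bias u) else M.mulVec x u + bias u

/-- One-hot position encoding `e_N(i)` for position `i` in a context of size `N`. -/
def posEnc (N : ℕ) (i : ℕ) : Fin N → ℝ := fun n => (if (n : ℕ) = i then 1 else 0)

open Filter Topology

/-!
A head whose query and key matrices only read position coordinates can be made to attend, as
`T → ∞`, from the position `N₀ + i` to any prescribed position. One head fetches the virtual token
`s_i` from position `i`, the other one the embedding `e_X` of the user token from position `N₀`, so
the attention output tends to `s_i + e_X`. Since `s_i` has entries in `[0, 1]`,
`ReLU(s_i + e_X - 1)` is `s_i` masked to its entry at `X`, the code `c` of the token `m(X)_i`; the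
remaining two layers sum up the entries and return the logits `2 c_u c - c_u² = c² - (c_u - c)²`,
which are largest at the token whose code is `c`. There are finitely many `m`, `X` and `i` and the
strict inequalities between the logits are open conditions, so one large `T` serves all of them.
-/

section Softmax

lemma tendsto_exp_mul_sub_atTop {ι : Type*} [DecidableEq ι] {s : ι → ℝ} {j₀ : ι}
    (hs : ∀ j ≠ j₀, s j < s j₀) (j : ι) :
    Tendsto (fun β : ℝ => exp (β * (s j - s j₀))) atTop (𝓝 ((Pi.single j₀ 1 : ι → ℝ) j)) := by
  obtain rfl | hj := eq_or_ne j j₀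
  · simp
  · rw [Pi.single_eq_of_ne hj]
    exact tendsto_exp_atBot.comp (tendsto_id.atTop_mul_const_of_neg (sub_neg.2 (hs j hj)))

lemma tendsto_exp_div_sum_exp_atTop {ι : Type*} [Fintype ι] [DecidableEq ι] {s : ι → ℝ} {j₀ : ι}
    (hs : ∀ j ≠ j₀, s j < s j₀) (j : ι) :
    Tendsto (fun β : ℝ => exp (β * s j) / ∑ r, exp (β * s r)) atTop
      (𝓝 ((Pi.single j₀ 1 : ι → ℝ) j)) := by
  have hsum : Tendsto (fun β : ℝ => ∑ r, exp (β * (s r - s j₀))) atTop (𝓝 1) := by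
    simpa using tendsto_finsetSum Finset.univ fun r _ => tendsto_exp_mul_sub_atTop hs r
  have hquot := (tendsto_exp_mul_sub_atTop hs j).div hsum one_ne_zero
  rw [div_one] at hquot
  refine hquot.congr fun β => ?_
  simp only [Pi.div_apply, mul_sub, exp_sub, ← Finset.sum_div]
  exact div_div_div_cancel_right₀ (exp_ne_zero _) _ _

end Softmax

section Attention

lemma tendsto_headAttn_atTop {k din p : ℕ} (hk : 0 < k) {Wq Wk : Matrix (Fin k) (Fin din) ℝ}
    {x : Fin p → Fin din → ℝ} {i j₀ : Fin p}
    (hs : ∀ j ≠ j₀, Wq *ᵥ x i ⬝ᵥ Wk *ᵥ x j < Wq *ᵥ x i ⬝ᵥ Wk *ᵥ x j₀) (j : Fin p) :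
    Tendsto (fun T => headAttn T Wq Wk x i j) atTop (𝓝 ((Pi.single j₀ 1 : Fin p → ℝ) j)) :=
  (tendsto_exp_div_sum_exp_atTop hs j).comp
    (tendsto_id.atTop_div_const (Real.sqrt_pos.2 (Nat.cast_pos.2 hk)))

lemma tendsto_attnBlock_atTop {k din dout p H : ℕ} (hk : 0 < k)
    {Wq Wk : Fin H → Matrix (Fin k) (Fin din) ℝ} (Wv : Fin H → Matrix (Fin dout) (Fin din) ℝ)
    {x : Fin p → Fin din → ℝ} {i : Fin p} {j₀ : Fin H → Fin p}
    (hs : ∀ h, ∀ j ≠ j₀ h, Wq h *ᵥ x i ⬝ᵥ Wk h *ᵥ x j < Wq h *ᵥ x i ⬝ᵥ Wk h *ᵥ x (j₀ h)) :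
    Tendsto (fun T => attnBlock T Wq Wk Wv x i) atTop (𝓝 (∑ h, Wv h *ᵥ x (j₀ h))) := by
  have hlim := tendsto_finsetSum Finset.univ fun h _ =>
    tendsto_finsetSum Finset.univ fun j _ =>
      (tendsto_headAttn_atTop hk (hs h) j).smul_const (Wv h *ᵥ x j)
  simpa [attnBlock, Pi.single_apply] using hlim

end Attention

section PositionalRouting

variable {d N a : ℕ}

/-- The projection of an input `[v; w] ∈ ℝ^{d+N}` onto its embedding `v`; it serves as the value
matrix of the attention heads. -/
def embReader (d N : ℕ) : Matrix (Fin d) (Fin (d + N)) ℝ :=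
  (1 : Matrix (Fin (d + N)) (Fin (d + N)) ℝ).submatrix (Fin.castAdd N) (Equiv.refl _)

/-- The matrix whose `r`-th row reads the coordinate `τ r` of the position encoding `w` of an input
`[v; w] ∈ ℝ^{d+N}`; it serves as query and key matrix of the attention heads. -/
def posReader (d : ℕ) (τ : Fin a → Fin N) : Matrix (Fin a) (Fin (d + N)) ℝ :=
  (1 : Matrix (Fin (d + N)) (Fin (d + N)) ℝ).submatrix (Fin.natAdd d ∘ τ) (Equiv.refl _)

lemma embReader_mulVec_append (v : Fin d → ℝ) (w : Fin N → ℝ) :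
    embReader d N *ᵥ Fin.append v w = v := by
  rw [embReader, submatrix_mulVec_equiv, one_mulVec]
  ext r
  simp

lemma posReader_mulVec_append (τ : Fin a → Fin N) (v : Fin d → ℝ) (w : Fin N → ℝ) :
    posReader d τ *ᵥ Fin.append v w = w ∘ τ := by
  rw [posReader, submatrix_mulVec_equiv, one_mulVec]
  ext r
  simp

lemma posEnc_comp_of_injective {σ : Fin a → Fin N} (hσ : σ.Injective) (r : Fin a) :
    posEnc N (σ r) ∘ σ = Pi.single r 1 := by
  ext r'
  simp [posEnc, Pi.single_apply, Fin.val_inj, hσ.eq_iff]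

lemma posReader_dotProduct_posReader {σ : Fin a → Fin N} (hσ : σ.Injective) (τ : Fin a → Fin N)
    (r : Fin a) (v v' : Fin d → ℝ) (j : ℕ) :
    posReader d σ *ᵥ Fin.append v (posEnc N (σ r)) ⬝ᵥ
      posReader d τ *ᵥ Fin.append v' (posEnc N j) = if (τ r : ℕ) = j then 1 else 0 := by
  rw [posReader_mulVec_append, posReader_mulVec_append, posEnc_comp_of_injective hσ,
    single_one_dotProduct]
  rfl

lemma tendsto_attnBlock_posReader {p H : ℕ} {σ : Fin a → Fin N} (hσ : σ.Injective)
    (τ : Fin H → Fin a → Fin N) (e : Fin p → Fin d → ℝ) {r : Fin a} {i : Fin p}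
    (hi : (i : ℕ) = σ r) {j₀ : Fin H → Fin p} (hj₀ : ∀ h, (j₀ h : ℕ) = τ h r) :
    Tendsto (fun T => attnBlock T (fun _ => posReader d σ) (fun h => posReader d (τ h))
        (fun _ => embReader d N) (fun j => Fin.append (e j) (posEnc N j)) i)
      atTop (𝓝 (∑ h, e (j₀ h))) := by
  let x : Fin p → Fin (d + N) → ℝ := fun j => Fin.append (e j) (posEnc N j)
  have hscore : ∀ h, ∀ j ≠ j₀ h, posReader d σ *ᵥ x i ⬝ᵥ posReader d (τ h) *ᵥ x j <
      posReader d σ *ᵥ x i ⬝ᵥ posReader d (τ h) *ᵥ x (j₀ h) := by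
    intro h j hj
    have hne : (j₀ h : ℕ) ≠ j := fun heq => hj (Fin.ext heq.symm)
    simp [x, hi, posReader_dotProduct_posReader hσ, ← hj₀, hne]
  have hlim := tendsto_attnBlock_atTop r.pos (fun _ => embReader d N) hscore
  simpa only [x, embReader_mulVec_append] using hlim

end PositionalRouting

section Decoder

lemma continuous_mlpLayer {a b : ℕ} (M : Matrix (Fin b) (Fin a) ℝ) (bias : Fin b → ℝ)
    (act : Bool) : Continuous (mlpLayer M bias act) := by
  have hlin : ∀ u, Continuous fun x : Fin a → ℝ => (M *ᵥ x) u + bias u := by fun_prop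
  cases act
  · exact continuous_pi hlin
  · exact continuous_pi fun u => continuous_const.max (hlin u)

variable {n : ℕ}

lemma mlpLayer_relu_add_single {s : Fin n → ℝ} (hs : ∀ v, s v ∈ Set.Icc 0 1) (X : Fin n) :
    mlpLayer 1 (fun _ => -1) true (s + Pi.single X 1) = Pi.single X (s X) := by
  ext v
  obtain rfl | hv := eq_or_ne v X
  · simp [mlpLayer, (hs v).1]
  · simp [mlpLayer, hv, (hs v).2]

lemma mlpLayer_ones {b : ℕ} (x : Fin n → ℝ) :
    mlpLayer (fun (_ : Fin b) _ => 1) 0 false x = fun _ => ∑ v, x v := by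
  ext
  simp [mlpLayer, mulVec, dotProduct]

lemma mlpLayer_quadratic (c : Fin n → ℝ) (s : ℝ) (u : Fin n) :
    mlpLayer (fun u (_ : Fin 1) => 2 * c u) (fun u => -c u ^ 2) false (fun _ => s) u =
      s ^ 2 - (c u - s) ^ 2 := by
  simp only [mlpLayer, mulVec, dotProduct, Finset.univ_unique, Finset.sum_singleton,
    Bool.false_eq_true, if_false]
  ring

/-- The three-layer MLP for a code `c` of the tokens by reals: from `s + e_X` with `s ∈ [0,1]^n` it
extracts `s_X` and returns logits that decrease with the distance of the code to `s_X`. -/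
noncomputable def mlpDecoder (c : Fin n → ℝ) (t : Fin n → ℝ) : Fin n → ℝ :=
  mlpLayer (fun u (_ : Fin 1) => 2 * c u) (fun u => -c u ^ 2) false
    (mlpLayer (fun (_ : Fin 1) _ => 1) 0 false
      (mlpLayer (1 : Matrix (Fin n) (Fin n) ℝ) (fun _ => -1) true t))

lemma continuous_mlpDecoder (c : Fin n → ℝ) : Continuous (mlpDecoder c) :=
  (continuous_mlpLayer _ _ _).comp
    ((continuous_mlpLayer _ _ _).comp (continuous_mlpLayer _ _ _))

lemma mlpDecoder_add_single (c : Fin n → ℝ) {s : Fin n → ℝ} (hs : ∀ v, s v ∈ Set.Icc 0 1)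
    (X u : Fin n) :
    mlpDecoder c (s + Pi.single X 1) u = s X ^ 2 - (c u - s X) ^ 2 := by
  rw [mlpDecoder, mlpLayer_relu_add_single hs, mlpLayer_ones, mlpLayer_quadratic,
    Finset.sum_pi_single' X, if_pos (Finset.mem_univ X)]

lemma mlpDecoder_lt_mlpDecoder {c : Fin n → ℝ} (hc : c.Injective)
    (hc01 : ∀ v, c v ∈ Set.Icc 0 1) (f : Fin n → Fin n) {X u : Fin n} (hu : u ≠ f X) :
    mlpDecoder c (c ∘ f + Pi.single X 1) u < mlpDecoder c (c ∘ f + Pi.single X 1) (f X) := by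
  have hpos : 0 < (c u - c (f X)) ^ 2 := sq_pos_of_ne_zero (sub_ne_zero.2 (hc.ne hu))
  have hs : ∀ v, (c ∘ f) v ∈ Set.Icc 0 1 := fun v => hc01 (f v)
  simpa [mlpDecoder_add_single c hs] using hpos

end Decoder

section Prompt

variable {V N0 : ℕ}

/-- The real number encoding a token in the entries of a virtual token. It is `v/V` for the paper's
tokens `1, …, V`, hence the shift by one. -/
noncomputable def tokenCode (v : Fin V) : ℝ := ((v : ℕ) + 1 : ℝ) / V

lemma tokenCode_injective : (tokenCode : Fin V → ℝ).Injective := by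
  intro v w h
  have hV : (V : ℝ) ≠ 0 := Nat.cast_ne_zero.2 v.pos.ne'
  simpa [tokenCode, div_left_inj' hV, Fin.val_inj] using h

lemma tokenCode_mem_Icc (v : Fin V) : tokenCode v ∈ Set.Icc 0 1 :=
  ⟨by unfold tokenCode; positivity, div_le_one_of_le₀ (mod_cast v.isLt) V.cast_nonneg⟩

/-- The embeddings of the sequence from which the `i`-th response token is predicted: the `N₀`
virtual tokens, the user token `X`, and the response tokens before the `i`-th one. -/
noncomputable def promptEmb (E : Matrix (Fin V) (Fin V) ℝ) (m : Fin V → Fin N0 → Fin V) (X : Fin V)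
    (i : Fin N0) (j : Fin (N0 + 1 + (i : ℕ))) : Fin V → ℝ :=
  if h1 : (j : ℕ) < N0 then fun v => tokenCode (m v ⟨j, h1⟩)
  else if (j : ℕ) = N0 then fun n => E n X
  else fun n => E n (m X ⟨(j : ℕ) - N0 - 1, by omega⟩)

lemma promptEmb_virtual (E : Matrix (Fin V) (Fin V) ℝ) (m : Fin V → Fin N0 → Fin V) (X : Fin V)
    (i : Fin N0) : promptEmb E m X i ⟨i, by omega⟩ = tokenCode ∘ (m · i) := by
  ext v
  simp [promptEmb]

lemma promptEmb_user (E : Matrix (Fin V) (Fin V) ℝ) (m : Fin V → Fin N0 → Fin V) (X : Fin V)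
    (i : Fin N0) : promptEmb E m X i ⟨N0, by omega⟩ = E.col X := by
  ext n
  simp [promptEmb]

end Prompt

section Transformer

variable {V N0 : ℕ}

/-- The positions that the two heads attend to from position `N₀ + r`: position `r`, which holds the
`r`-th virtual token, and position `N₀`, which holds the user token. -/
def headTarget (N0 : ℕ) : Fin 2 → Fin N0 → Fin (N0 + N0) :=
  ![Fin.castAdd N0, fun r => Fin.natAdd N0 ⟨0, r.pos⟩]

/-- The attention output, at inverse temperature `T`, at the position from which the `i`-th response
token is predicted. -/
noncomputable def promptAttn (T : ℝ) (m : Fin V → Fin N0 → Fin V) (X : Fin V) (i : Fin N0) :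
    Fin V → ℝ :=
  attnBlock T (fun _ => posReader V (Fin.natAdd N0)) (fun h => posReader V (headTarget N0 h))
    (fun _ => embReader V (N0 + N0))
    (fun j => Fin.append (promptEmb 1 m X i j) (posEnc (N0 + N0) j)) ⟨N0 + (i : ℕ), by omega⟩

lemma tendsto_promptAttn (m : Fin V → Fin N0 → Fin V) (X : Fin V) (i : Fin N0) :
    Tendsto (fun T => promptAttn T m X i) atTop (𝓝 (tokenCode ∘ (m · i) + Pi.single X 1)) := by
  have hlim := tendsto_attnBlock_posReader (Fin.natAdd_injective N0 N0) (headTarget N0)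
    (promptEmb 1 m X i) (r := i) (i := ⟨N0 + (i : ℕ), by omega⟩) rfl
    (j₀ := ![⟨i, by omega⟩, ⟨N0, by omega⟩]) (by simp [Fin.forall_fin_two, headTarget])
  have hcol : (1 : Matrix (Fin V) (Fin V) ℝ).col X = Pi.single X 1 := by
    ext v
    simp [one_apply, Pi.single_apply]
  simpa [promptAttn, Fin.sum_univ_two, promptEmb_virtual, promptEmb_user, hcol] using hlim

lemma eventually_mlpDecoder_promptAttn_lt (m : Fin V → Fin N0 → Fin V) (X : Fin V) (i : Fin N0)
    {u : Fin V} (hu : u ≠ m X i) :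
    ∀ᶠ T in atTop, mlpDecoder tokenCode (promptAttn T m X i) u <
      mlpDecoder tokenCode (promptAttn T m X i) (m X i) := by
  have hlim := tendsto_pi_nhds.1 <|
    ((continuous_mlpDecoder tokenCode).tendsto _).comp (tendsto_promptAttn m X i)
  exact (hlim u).eventually_lt (hlim (m X i)) <|
    mlpDecoder_lt_mlpDecoder tokenCode_injective tokenCode_mem_Icc (m · i) hu

end Transformer

/-- **Conditional generation of longer responses (`n_X = 1`, `n_Y = N₀`) with `N₀` virtual
tokens.** For any `V, N₀ > 0` there is a transformer with vocabulary size `V`, context size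
`N = 2N₀`, embedding size `d_e = V`, one attention layer with two heads and a three-layer MLP
such that for every map `m : {1,...,V} → {1,...,V}^{N₀}` and user token `X`, greedy
autoregressive generation after the `N₀` virtual tokens `s_i = (m(1)_i/V, ..., m(V)_i/V)`
(tokens `0`-indexed as `Fin V`, so `((m v i : ℕ)+1)/V` stands for `m(v)_i/V`) followed by the
embedding of `X` produces exactly `(m(X)_1, ..., m(X)_{N₀})`: at each step `i`, with input
consisting of the virtual tokens, the embedding of `X` and the embeddings of
`m(X)_1, ..., m(X)_{i−1}`, the logits at the last position attain their strict maximum at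
`m X i`. -/
theorem virtual_tokens_longer_conditional_generation (V N0 : ℕ) (hV : 0 < V) (hN0 : 0 < N0) :
    ∃ (k dout d1 d2 : ℕ) (T : ℝ), 0 < T ∧
    ∃ (E : Matrix (Fin V) (Fin V) ℝ)
      (Wq Wk : Fin 2 → Matrix (Fin k) (Fin (V + (N0 + N0))) ℝ)
      (Wv : Fin 2 → Matrix (Fin dout) (Fin (V + (N0 + N0))) ℝ)
      (M1 : Matrix (Fin d1) (Fin dout) ℝ) (b1 : Fin d1 → ℝ) (a1 : Bool)
      (M2 : Matrix (Fin d2) (Fin d1) ℝ) (b2 : Fin d2 → ℝ) (a2 : Bool)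
      (M3 : Matrix (Fin V) (Fin d2) ℝ) (b3 : Fin V → ℝ) (a3 : Bool),
    ∀ (m : Fin V → Fin N0 → Fin V) (X : Fin V) (i : Fin N0),
      let emb : Fin (N0 + 1 + (i : ℕ)) → Fin V → ℝ := fun j =>
        if h1 : (j : ℕ) < N0 then (fun v => ((m v ⟨(j : ℕ), h1⟩ : ℕ) + 1 : ℝ) / V)
        else if h2 : (j : ℕ) = N0 then (fun n => E n X)
        else (fun n => E n (m X ⟨(j : ℕ) - N0 - 1, by
          have := j.isLt; have := i.isLt; omega⟩))
      let x : Fin (N0 + 1 + (i : ℕ)) → Fin (V + (N0 + N0)) → ℝ :=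
        fun j => Fin.append (emb j) (posEnc (N0 + N0) (j : ℕ))
      let logits : Fin V → ℝ :=
        mlpLayer M3 b3 a3 (mlpLayer M2 b2 a2 (mlpLayer M1 b1 a1
          (attnBlock T Wq Wk Wv x ⟨N0 + (i : ℕ), by omega⟩)))
      ∀ u : Fin V, u ≠ m X i → logits u < logits (m X i) := by
  have hev : ∀ᶠ T in atTop, ∀ (m : Fin V → Fin N0 → Fin V) (X : Fin V) (i : Fin N0) (u : Fin V),
      u ≠ m X i → mlpDecoder tokenCode (promptAttn T m X i) u <
        mlpDecoder tokenCode (promptAttn T m X i) (m X i) := by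
    simp only [eventually_all]
    exact fun m X i u hu => eventually_mlpDecoder_promptAttn_lt m X i hu
  obtain ⟨T, hlt, hT⟩ := (hev.and (eventually_gt_atTop 0)).exists
  exact ⟨N0, V, V, 1, T, hT, 1, fun _ => posReader V (Fin.natAdd N0),
    fun h => posReader V (headTarget N0 h), fun _ => embReader V (N0 + N0),
    _, _, _, _, _, _, _, _, _, hlt⟩
end

section
/- For every vocabulary size V > 0, there exist a transformer (of the simplified decoder-only form described in the context, but with two attention blocks, each followed by a per-position MLP) with vocabulary size V, context size N = 4, embedding dimension d_e = V, an inverse temperature T > 0, such that for every map m : {1,...,V} × {1,...,V} → {1,...,V} and all user tokens X_1, X_2 ∈ {1,...,V}, when the input consists of the zero virtual token at position 1, the virtual token s_1 whose f-th coordinate is Σ_{i=1}^V m(f,i)·V^{i−1}/V^V at position 2, the embedding of X_1 at position 3, and the embedding of X_2 at position 4, the argmax of the output logits at position 4 equals m(X_1, X_2). Thus a single virtual token can specify an arbitrary map from two user input tokens to a response token. -/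
open Matrix Real

/-- A per-position MLP built from linear layers with bias, each optionally ReLU-activated. -/
inductive MLP : ℕ → ℕ → Type
  | layer {a b : ℕ} (M : Matrix (Fin b) (Fin a) ℝ) (bias : Fin b → ℝ) (act : Bool) : MLP a b
  | comp {a b c : ℕ} (f : MLP a b) (g : MLP b c) : MLP a c

/-- Evaluation of an MLP. -/
noncomputable def MLP.eval : {a b : ℕ} → MLP a b → (Fin a → ℝ) → (Fin b → ℝ)
  | _, _, .layer M bias act, x =>
      fun u => if act then max 0 (M.mulVec x u + bias u) else M.mulVec x u + bias u
  | _, _, .comp f g, x => g.eval (f.eval x)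

open Function

/-!
For a fixed `V` only finitely many prompts `(m, X₁, X₂)` occur, and a ReLU network can interpolate
arbitrary values at finitely many points, so it suffices that the first attention block sends
different prompts to different vectors. Its scores depend on positions only and are tuned so that
the four positions get weights proportional to `1, 1, 1, 2`. Up to the factor `1 / 5` the block
then outputs `s + c (e_{X₁} + 2 e_{X₂})`, where `c e_X` is the embedding of `X`. When `c` exceeds
every difference between coordinates of virtual tokens, this sum determines the integer vector
`e_{X₁} + 2 e_{X₂}`, hence the ordered pair `(X₁, X₂)`, hence `s`; and `s` determines `m`, each of
its coordinates being a base-`V` expansion of a row of `m`. All positions leave the first MLP with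
the same vector, on which the second attention block acts trivially.

For the interpolation, project to a line on which the points are separated and sort them: two ReLU
layers compute the indicators `[j ≤ i]`, which form a unitriangular, hence invertible, matrix.
-/

lemma exists_injective_dotProduct {K ι n : Type*} [Field K] [Infinite K] [Finite ι] [Fintype n]
    {t : ι → n → K} (ht : Injective t) : ∃ w : n → K, Injective fun i => w ⬝ᵥ t i := by
  classical
  obtain ⟨w, hw⟩ := Module.Dual.exists_forall_ne_zero_of_forall_exists
    (fun p : {p : ι × ι // p.1 ≠ p.2} => dotProductEquiv K n (t p.1.1 - t p.1.2)) fun p => by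
      by_contra! h
      exact p.2 (ht (sub_eq_zero.mp ((dotProductEquiv K n).map_eq_zero_iff.mp (LinearMap.ext h))))
  refine ⟨w, fun i j hij => by_contra fun hne => hw ⟨(i, j), hne⟩ ?_⟩
  simpa [sub_dotProduct, dotProduct_comm _ w, sub_eq_zero] using hij

lemma exists_forall_one_le_mul_sub {ι : Type*} [Finite ι] (τ : ι → ℝ) :
    ∃ C : ℝ, ∀ i j, τ i < τ j → 1 ≤ C * (τ j - τ i) := by
  obtain ⟨C, hC⟩ := Finite.exists_le fun p : ι × ι => (τ p.2 - τ p.1)⁻¹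
  exact ⟨C, fun i j hij => (inv_le_iff_one_le_mul₀ (sub_pos.mpr hij)).mp (hC (i, j))⟩

lemma isUnit_matrix_ite_le {ι R : Type*} [Fintype ι] [LinearOrder ι] [CommRing R] :
    IsUnit (Matrix.of fun j i : ι => if j ≤ i then (1 : R) else 0) := by
  have htri : (Matrix.of fun j i : ι => if j ≤ i then (1 : R) else 0).IsUpperTriangular :=
    fun j i hij => if_neg (not_le.mpr hij)
  rw [Matrix.isUnit_iff_isUnit_det, det_of_isUpperTriangular htri]
  simp

lemma MLP.exists_eval_eq_ite_le {n N : ℕ} (w : Fin n → ℝ) {t : Fin N → Fin n → ℝ}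
    (hw : StrictMono fun i => w ⬝ᵥ t i) :
    ∃ f : MLP n N, ∀ j i, f.eval (t j) i = if j ≤ i then 1 else 0 := by
  obtain ⟨C, hC⟩ := exists_forall_one_le_mul_sub fun i => w ⬝ᵥ t i
  let f : MLP n N := .comp (.layer (Matrix.of fun _ => w) (fun i => -(w ⬝ᵥ t i)) true)
    (.layer (diagonal fun _ => -C) 1 true)
  have heval (x i) : f.eval x i = max 0 (1 - C * max 0 (w ⬝ᵥ x - w ⬝ᵥ t i)) := by
    simp [f, MLP.eval, mulVec, sub_eq_add_neg, add_comm]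
  refine ⟨f, fun j i => ?_⟩
  rw [heval]
  split_ifs with hji
  · rw [max_eq_left (sub_nonpos.mpr (hw.monotone hji))]
    simp
  · have hij : w ⬝ᵥ t i < w ⬝ᵥ t j := hw (not_le.mp hji)
    rw [max_eq_right (sub_nonneg.mpr hij.le), max_eq_left (sub_nonpos.mpr (hC i j hij))]

lemma MLP.exists_eval_eq_of_strictMono {n N d : ℕ} (w : Fin n → ℝ) {t : Fin N → Fin n → ℝ}
    (hw : StrictMono fun i => w ⬝ᵥ t i) (y : Fin N → Fin d → ℝ) :
    ∃ f : MLP n d, ∀ j, f.eval (t j) = y j := by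
  obtain ⟨f, hf⟩ := exists_eval_eq_ite_le w hw
  let A : Matrix (Fin N) (Fin N) ℝ := Matrix.of fun j i => if j ≤ i then 1 else 0
  let B : Matrix (Fin N) (Fin d) ℝ := A⁻¹ * Matrix.of y
  have hAB : A * B = Matrix.of y :=
    A.mul_nonsing_inv_cancel_left _ (A.isUnit_iff_isUnit_det.mp isUnit_matrix_ite_le)
  refine ⟨.comp f (.layer Bᵀ 0 false), fun j => ?_⟩
  have hrow : f.eval (t j) = A j := funext (hf j)
  calc MLP.eval (.comp f (.layer Bᵀ 0 false)) (t j)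
      = A j ᵥ* B := by simp [MLP.eval, hrow, mulVec_transpose]
    _ = (A * B) j := (mul_apply_eq_vecMul A B j).symm
    _ = y j := congrFun hAB j

theorem MLP.exists_eval_eq {ι : Type*} [Finite ι] {n d : ℕ} {t : ι → Fin n → ℝ}
    (ht : Injective t) (y : ι → Fin d → ℝ) : ∃ f : MLP n d, ∀ i, f.eval (t i) = y i := by
  obtain ⟨w, hw⟩ := exists_injective_dotProduct ht
  obtain ⟨N, ⟨e⟩⟩ := Finite.exists_equiv_fin ι
  let σ : Fin N ≃ ι := (Tuple.sort fun k => w ⬝ᵥ t (e.symm k)).trans e.symm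
  have hσ : StrictMono fun k => w ⬝ᵥ t (σ k) :=
    (Tuple.monotone_sort fun k => w ⬝ᵥ t (e.symm k)).strictMono_of_injective
      (hw.comp σ.injective)
  obtain ⟨f, hf⟩ := exists_eval_eq_of_strictMono w hσ (y ∘ σ)
  exact ⟨f, fun i => by simpa using hf (σ.symm i)⟩

lemma MLP.eval_layer_one_zero {n : ℕ} (x : Fin n → ℝ) :
    MLP.eval (.layer 1 0 false) x = x := by
  simp [MLP.eval]

lemma sum_headAttn {k d p : ℕ} (T : ℝ) (Wq Wk : Matrix (Fin k) (Fin d) ℝ)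
    (x : Fin p → Fin d → ℝ) (i : Fin p) : ∑ j, headAttn T Wq Wk x i j = 1 := by
  have : Nonempty (Fin p) := ⟨i⟩
  simp only [headAttn, ← Finset.sum_div]
  exact div_self (Finset.sum_pos (fun _ _ => exp_pos _) Finset.univ_nonempty).ne'

lemma attnBlock_const {k d d' p H : ℕ} (T : ℝ) (Wq Wk : Fin H → Matrix (Fin k) (Fin d) ℝ)
    (Wv : Fin H → Matrix (Fin d') (Fin d) ℝ) (z : Fin d → ℝ) (i : Fin p) :
    attnBlock T Wq Wk Wv (fun _ => z) i = ∑ h, Wv h *ᵥ z := by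
  simp only [attnBlock, ← Finset.sum_smul, sum_headAttn, one_smul]

lemma posEnc_eq_single {N : ℕ} (i : Fin N) : posEnc N i = Pi.single i 1 := by
  ext n
  simp [posEnc, Pi.single_apply, Fin.ext_iff]

lemma append_dotProduct_append {R : Type*} [NonUnitalNonAssocSemiring R] {m n : ℕ}
    (a a' : Fin m → R) (b b' : Fin n → R) :
    Fin.append a b ⬝ᵥ Fin.append a' b' = a ⬝ᵥ a' + b ⬝ᵥ b' := by
  simp [dotProduct, Fin.sum_univ_add]

theorem exists_attnBlock_eq_centerMass {n N : ℕ} {T : ℝ} (hT : T ≠ 0) {ω : Fin N → ℝ}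
    (hω : ∀ j, 0 < ω j) :
    ∃ (Wq Wk : Fin 1 → Matrix (Fin 1) (Fin (n + N)) ℝ)
      (Wv : Fin 1 → Matrix (Fin n) (Fin (n + N)) ℝ),
    ∀ (a : Fin N → Fin n → ℝ) (i : Fin N),
      attnBlock T Wq Wk Wv (fun j => Fin.append (a j) (posEnc N j)) i =
        Finset.univ.centerMass ω a := by
  let q : Matrix (Fin 1) (Fin (n + N)) ℝ := fun _ => Fin.append 0 1
  let k : Matrix (Fin 1) (Fin (n + N)) ℝ := fun _ => Fin.append 0 fun j => log (ω j) / T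
  let v : Matrix (Fin n) (Fin (n + N)) ℝ := fun r => Fin.append (Pi.single r 1) 0
  refine ⟨fun _ => q, fun _ => k, fun _ => v, fun a i => ?_⟩
  let x : Fin N → Fin (n + N) → ℝ := fun j => Fin.append (a j) (posEnc N j)
  have hq (j) : q *ᵥ x j = 1 := by
    ext r
    simp [q, x, mulVec, append_dotProduct_append, posEnc_eq_single]
  have hk (j) : k *ᵥ x j = fun _ => log (ω j) / T := by
    ext r
    simp [k, x, mulVec, append_dotProduct_append, posEnc_eq_single]
  have hv (j) : v *ᵥ x j = a j := by
    ext r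
    simp [v, x, mulVec, append_dotProduct_append]
  have hexp (j) : exp (T / √((1 : ℕ) : ℝ) * (q *ᵥ x i ⬝ᵥ k *ᵥ x j)) = ω j := by
    simp [hq, hk, dotProduct, mul_div_cancel₀ _ hT, exp_log (hω j)]
  change attnBlock T _ _ _ x i = _
  simp only [attnBlock, headAttn, hexp, hv, Finset.univ_unique, Finset.sum_singleton,
    Finset.centerMass, Finset.smul_sum, smul_smul, inv_mul_eq_div]

lemma exists_injective_add_smul_intCast {α β ι : Type*} [Finite α] [Finite ι] {s : α → ι → ℝ}
    (hs : Injective s) {n : β → ι → ℤ} (hn : Injective n) :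
    ∃ c : ℝ, Injective fun p : α × β => s p.1 + c • fun u => (n p.2 u : ℝ) := by
  obtain ⟨B, hB⟩ := Finite.exists_le fun q : α × α × ι => |s q.1 q.2.2 - s q.2.1 q.2.2|
  refine ⟨B + 1, fun ⟨a, b⟩ ⟨a', b'⟩ h => ?_⟩
  have hbb' : n b = n b' := funext fun u => by
    have hle : |s a u - s a' u| ≤ B := hB (a, a', u)
    have hpos : 0 < B + 1 := by linarith [abs_nonneg (s a u - s a' u)]
    have heq : s a u + (B + 1) * n b u = s a' u + (B + 1) * n b' u := congrFun h u
    have hmul : s a u - s a' u = (B + 1) * (n b' u - n b u) := by linarith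
    have hlt : (B + 1) * |(n b' u - n b u : ℝ)| < (B + 1) * 1 := by
      rw [← abs_of_pos hpos, ← abs_mul, abs_of_pos hpos, ← hmul]
      linarith
    have habs : |n b' u - n b u| < 1 := by exact_mod_cast lt_of_mul_lt_mul_left hlt hpos.le
    exact (sub_eq_zero.mp (Int.abs_lt_one_iff.mp habs)).symm
  obtain rfl := hn hbb'
  exact Prod.ext (hs (add_right_cancel h)) rfl

lemma injective_single_one_add_single_two {α : Type*} [DecidableEq α] :
    Injective fun p : α × α => (Pi.single p.1 1 + Pi.single p.2 2 : α → ℤ) := by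
  rintro ⟨a, b⟩ ⟨a', b'⟩ h
  have hval (u : α) := congrFun h u
  simp only [Pi.add_apply, Pi.single_apply] at hval
  grind [hval a, hval a', hval b, hval b']

lemma injective_sum_succ_mul_pow (b n : ℕ) :
    Injective fun d : Fin n → Fin b => ∑ i, ((d i : ℕ) + 1 : ℝ) * (b : ℝ) ^ (i : ℕ) := by
  intro d d' h
  simp only [add_mul, Finset.sum_add_distrib, add_left_inj] at h
  apply finFunctionFinEquiv.injective
  ext
  simp only [finFunctionFinEquiv_apply]
  exact_mod_cast h

lemma centerMass_one_one_one_two {α : Type*} [DecidableEq α] (c : ℝ) (s : α → ℝ) (a b : α) :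
    Finset.univ.centerMass ![1, 1, 1, (2 : ℝ)] ![0, s, Pi.single a c, Pi.single b c] =
      (5 : ℝ)⁻¹ • (s + c • fun u => ((Pi.single a 1 + Pi.single b 2 : α → ℤ) u : ℝ)) := by
  have hsum : ∑ j, ![1, 1, 1, (2 : ℝ)] j = 5 := by norm_num [Fin.sum_univ_succ]
  rw [Finset.centerMass, hsum]
  congr 1
  ext u
  simp only [Finset.sum_apply, Pi.smul_apply, Pi.zero_apply, Pi.single_apply, smul_eq_mul,
    Fin.sum_univ_four, cons_val, mul_zero, one_mul, zero_add, Pi.add_apply, Int.cast_add,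
    Int.cast_ite, Int.cast_one, Int.cast_zero, Int.cast_ofNat]
  split_ifs <;> ring

theorem virtual_token_two_user_tokens_general (V : ℕ) {s : (Fin V → Fin V → Fin V) → Fin V → ℝ}
    (hs : Injective s) {T : ℝ} (hT : T ≠ 0) :
    ∃ (k1 k2 dout1 dmid dout2 H1 H2 : ℕ) (E : Matrix (Fin V) (Fin V) ℝ)
      (Wq1 Wk1 : Fin H1 → Matrix (Fin k1) (Fin (V + 4)) ℝ)
      (Wv1 : Fin H1 → Matrix (Fin dout1) (Fin (V + 4)) ℝ)
      (mlp1 : MLP dout1 dmid)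
      (Wq2 Wk2 : Fin H2 → Matrix (Fin k2) (Fin dmid) ℝ)
      (Wv2 : Fin H2 → Matrix (Fin dout2) (Fin dmid) ℝ)
      (mlp2 : MLP dout2 V),
    ∀ (m : Fin V → Fin V → Fin V) (X1 X2 : Fin V),
      let x : Fin 4 → Fin (V + 4) → ℝ :=
        ![Fin.append (fun _ : Fin V => (0 : ℝ)) (posEnc 4 0),
          Fin.append (s m) (posEnc 4 1),
          Fin.append (fun n => E n X1) (posEnc 4 2),
          Fin.append (fun n => E n X2) (posEnc 4 3)]
      let y1 : Fin 4 → Fin dmid → ℝ := fun i => mlp1.eval (attnBlock T Wq1 Wk1 Wv1 x i)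
      let logits : Fin V → ℝ := mlp2.eval (attnBlock T Wq2 Wk2 Wv2 y1 3)
      ∀ u : Fin V, u ≠ m X1 X2 → logits u < logits (m X1 X2) := by
  obtain ⟨Wq, Wk, Wv, hattn⟩ := exists_attnBlock_eq_centerMass (n := V) hT
    (ω := ![1, 1, 1, (2 : ℝ)]) (by simp [Fin.forall_fin_succ])
  obtain ⟨c, hc⟩ := exists_injective_add_smul_intCast hs
    (injective_single_one_add_single_two (α := Fin V))
  obtain ⟨f, hf⟩ := MLP.exists_eval_eq
    ((smul_right_injective _ (by norm_num : (5 : ℝ)⁻¹ ≠ 0)).comp hc)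
    fun p => Pi.single (p.1 p.2.1 p.2.2) (1 : ℝ)
  refine ⟨1, 1, V, V, V, 1, 1, Matrix.of fun n X => (Pi.single X c : Fin V → ℝ) n, Wq, Wk, Wv, f,
    0, 0, 1, .layer 1 0 false, ?_⟩
  intro m X1 X2 x y1 logits u hu
  have hx : x = fun j =>
      Fin.append (![0, s m, Pi.single X1 c, Pi.single X2 c] j) (posEnc 4 j) := by
    funext j
    fin_cases j <;> rfl
  have hy : y1 = fun _ => Pi.single (m X1 X2) 1 := by
    funext i
    simp only [y1, hx, hattn, centerMass_one_one_one_two]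
    exact hf (m, X1, X2)
  have hlogits : logits = Pi.single (m X1 X2) 1 := by
    simp only [logits, hy, attnBlock_const, MLP.eval_layer_one_zero, Finset.univ_unique,
      Finset.sum_singleton, Pi.one_apply, one_mulVec]
  simp [hlogits, hu]

/-- **A single virtual token can specify an arbitrary map from two user tokens to a response
(`n_X = 2`, `n_Y = 1`).** For any `V > 0` there is a transformer with vocabulary size `V`,
context size `N = 4`, embedding size `d_e = V`, two attention blocks each followed by a
per-position MLP, and an inverse temperature `T > 0` such that for every map
`m : {1,...,V}² → {1,...,V}` and user tokens `X₁, X₂`, with input consisting of the zero virtual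
token, the virtual token `s₁` with `f`-th coordinate `Σ_{i=1}^V m(f,i) V^{i−1} / V^V` (tokens
`0`-indexed as `Fin V`, so `(m f i : ℕ) + 1` stands for `m(f,i)`), the embedding of `X₁` and the
embedding of `X₂`, the output logits at the last position attain their strict maximum at
`m X₁ X₂`. -/
theorem virtual_token_two_user_tokens (V : ℕ) (hV : 0 < V) :
    ∃ (k1 k2 dout1 dmid dout2 H1 H2 : ℕ) (T : ℝ), 0 < T ∧
    ∃ (E : Matrix (Fin V) (Fin V) ℝ)
      (Wq1 Wk1 : Fin H1 → Matrix (Fin k1) (Fin (V + 4)) ℝ)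
      (Wv1 : Fin H1 → Matrix (Fin dout1) (Fin (V + 4)) ℝ)
      (mlp1 : MLP dout1 dmid)
      (Wq2 Wk2 : Fin H2 → Matrix (Fin k2) (Fin dmid) ℝ)
      (Wv2 : Fin H2 → Matrix (Fin dout2) (Fin dmid) ℝ)
      (mlp2 : MLP dout2 V),
    ∀ (m : Fin V → Fin V → Fin V) (X1 X2 : Fin V),
      let s1 : Fin V → ℝ := fun f =>
        (∑ i : Fin V, ((m f i : ℕ) + 1 : ℝ) * (V : ℝ) ^ (i : ℕ)) / (V : ℝ) ^ V
      let x : Fin 4 → Fin (V + 4) → ℝ :=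
        ![Fin.append (fun _ : Fin V => (0 : ℝ)) (posEnc 4 0),
          Fin.append s1 (posEnc 4 1),
          Fin.append (fun n => E n X1) (posEnc 4 2),
          Fin.append (fun n => E n X2) (posEnc 4 3)]
      let y1 : Fin 4 → Fin dmid → ℝ := fun i => mlp1.eval (attnBlock T Wq1 Wk1 Wv1 x i)
      let logits : Fin V → ℝ := mlp2.eval (attnBlock T Wq2 Wk2 Wv2 y1 3)
      ∀ u : Fin V, u ≠ m X1 X2 → logits u < logits (m X1 X2) := by
  have hs : Injective fun (m : Fin V → Fin V → Fin V) (f : Fin V) =>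
      (∑ i : Fin V, ((m f i : ℕ) + 1 : ℝ) * (V : ℝ) ^ (i : ℕ)) / (V : ℝ) ^ V := by
    intro m m' h
    have hpow : (V : ℝ) ^ V ≠ 0 := by exact_mod_cast Nat.pow_self_pos.ne'
    exact funext fun f => injective_sum_succ_mul_pow V V ((div_left_inj' hpow).mp (congrFun h f))
  obtain ⟨k1, k2, dout1, dmid, dout2, H1, H2, h⟩ :=
    virtual_token_two_user_tokens_general V hs one_ne_zero
  exact ⟨k1, k2, dout1, dmid, dout2, H1, H2, 1, one_pos, h⟩
end

section
/- Let c > 0, H ∈ ℝ^{d×d}, W_V ∈ ℝ^{m×d}, let x_1, ..., x_p ∈ ℝ^d be content inputs and s_1, ..., s_{n_S} ∈ ℝ^d prefix vectors. Define the pretrained attention A_{ij} = exp(c·x_iᵀHx_j) / Σ_{r=1}^p exp(c·x_iᵀHx_r), pretrained attention output t_i = Σ_{j=1}^p A_{ij} W_V x_j, the prefix-tuned attention with denominator D_i = Σ_{k=1}^{n_S} exp(c·x_iᵀHs_k) + Σ_{r=1}^p exp(c·x_iᵀHx_r) (namely A^pt_{i,S_k} = exp(c·x_iᵀHs_k)/D_i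 and A^pt_{ij} = exp(c·x_iᵀHx_j)/D_i), and prefix-tuned output t^pt_i = Σ_{k=1}^{n_S} A^pt_{i,S_k} W_V s_k + Σ_{j=1}^p A^pt_{ij} W_V x_j. Then for every position i: t^pt_i = Σ_{k=1}^{n_S} A^pt_{i,S_k}·W_V s_k + (1 − Σ_{k=1}^{n_S} A^pt_{i,S_k})·t_i. Consequently the difference t^pt_i − t_i lies in the linear span of the n_S + 1 vectors W_V s_1, ..., W_V s_{n_S}, t_i; the prefix-induced change of the attention output is confined to a subspace determined by the prefix of dimension at most n_S + 1. -/
open Matrix Real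

/-!
Softmax weights restrict as probabilities do under conditioning: on a subfamily of positions they
are the softmax weights of the subfamily, times the total weight the subfamily receives. Adjoining
a prefix therefore only rescales the content weights by the mass that the prefix leaves over, so
the output is a combination of the prefix values and of the unprefixed output.
-/

section Softmax

variable {ι κ : Type*} [Fintype ι] [Fintype κ]

/-- The softmax of a finite family of scores: positive weights summing to `1`, by which attention
averages its values. The scores `c * x_iᵀ H x_j` of a fixed query are taken as one real family, with
the scale `c` included. -/
noncomputable def softmax (a : ι → ℝ) (j : ι) : ℝ :=
  exp (a j) / ∑ r, exp (a r)

theorem sum_exp_pos [Nonempty ι] (a : ι → ℝ) : 0 < ∑ j, exp (a j) :=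
  Finset.sum_pos (fun j _ => exp_pos (a j)) Finset.univ_nonempty

theorem sum_softmax [Nonempty ι] (a : ι → ℝ) : ∑ j, softmax a j = 1 := by
  simp only [softmax, ← Finset.sum_div]
  exact div_self (sum_exp_pos a).ne'

theorem softmax_apply_eq_sum_mul_softmax_comp (a : κ → ℝ) (g : ι → κ) (j : ι) :
    softmax a (g j) = (∑ r, softmax a (g r)) * softmax (a ∘ g) j := by
  have : Nonempty ι := ⟨j⟩
  simp only [softmax, ← Finset.sum_div]
  exact (div_mul_div_cancel₀' (sum_exp_pos (a ∘ g)).ne' _ _).symm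

theorem sum_softmax_inr_eq_one_sub [Nonempty (κ ⊕ ι)] (a : κ ⊕ ι → ℝ) :
    ∑ j, softmax a (.inr j) = 1 - ∑ k, softmax a (.inl k) := by
  rw [← sum_softmax a, Fintype.sum_sum_type, add_sub_cancel_left]

end Softmax

section Attention

variable {ι κ V : Type*} [Fintype ι] [Fintype κ]

/-- The attention output of a fixed query: the softmax average of the values `v` with scores `a`.
Attention with a prefix is attention over `κ ⊕ ι`, the prefix being indexed by the left summand. -/
noncomputable def attention [AddCommMonoid V] [Module ℝ V] (a : ι → ℝ) (v : ι → V) : V :=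
  ∑ j, softmax a j • v j

theorem sum_softmax_smul_comp [AddCommMonoid V] [Module ℝ V] (a : κ → ℝ) (g : ι → κ) (v : ι → V) :
    ∑ j, softmax a (g j) • v j = (∑ j, softmax a (g j)) • attention (a ∘ g) v := by
  rw [attention, Finset.smul_sum]
  refine Finset.sum_congr rfl fun j _ => ?_
  rw [smul_smul, ← softmax_apply_eq_sum_mul_softmax_comp]

theorem attention_eq_sum_inl_add_smul_attention_inr [Nonempty (κ ⊕ ι)] [AddCommMonoid V]
    [Module ℝ V] (a : κ ⊕ ι → ℝ) (v : κ ⊕ ι → V) :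
    attention a v = ∑ k, softmax a (.inl k) • v (.inl k) +
      (1 - ∑ k, softmax a (.inl k)) • attention (a ∘ .inr) (v ∘ .inr) := by
  rw [attention, Fintype.sum_sum_type, ← sum_softmax_inr_eq_one_sub, ← sum_softmax_smul_comp]
  rfl

end Attention

theorem sum_smul_add_smul_sub_mem_span_insert {R M κ : Type*} [Ring R] [AddCommGroup M] [Module R M]
    [Fintype κ] (w : κ → R) (u : κ → M) (b : R) (t : M) :
    ∑ k, w k • u k + b • t - t ∈ Submodule.span R (insert t (Set.range u)) := by
  have hu : ∑ k, w k • u k ∈ Submodule.span R (Set.range u) :=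
    Submodule.sum_smul_mem _ w fun k _ => Submodule.subset_span (Set.mem_range_self k)
  refine Submodule.mem_span_insert.2 ⟨b - 1, _, hu, ?_⟩
  rw [sub_smul, one_smul]
  abel

theorem long_prefix_biases_attention_output_general {ι κ V : Type*} [Fintype ι] [Nonempty ι]
    [Fintype κ] [AddCommGroup V] [Module ℝ V] (a : κ ⊕ ι → ℝ) (v : κ ⊕ ι → V) :
    attention a v = ∑ k, softmax a (.inl k) • v (.inl k) +
        (1 - ∑ k, softmax a (.inl k)) • attention (a ∘ .inr) (v ∘ .inr) ∧
      attention a v - attention (a ∘ .inr) (v ∘ .inr) ∈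
        Submodule.span ℝ (insert (attention (a ∘ .inr) (v ∘ .inr)) (Set.range (v ∘ .inl))) := by
  refine ⟨attention_eq_sum_inl_add_smul_attention_inr a v, ?_⟩
  rw [attention_eq_sum_inl_add_smul_attention_inr]
  exact sum_smul_add_smul_sub_mem_span_insert _ (v ∘ .inl) _ _

/-- **A prefix of length `n_S` confines the change of the attention output to a small subspace.**
With pretrained output `t_i = Σ_j A_{ij} W_V x_j` and prefix-tuned output
`t^pt_i = Σ_k A^pt_{i,S_k} W_V s_k + Σ_j A^pt_{ij} W_V x_j`, we have
`t^pt_i = Σ_k A^pt_{i,S_k} W_V s_k + (1 − Σ_k A^pt_{i,S_k}) t_i`; consequently `t^pt_i − t_i`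
lies in the span of the `n_S + 1` vectors `W_V s_1, ..., W_V s_{n_S}, t_i`. -/
theorem long_prefix_biases_attention_output {d m p nS : ℕ} (hp : 0 < p) (c : ℝ) (hc : 0 < c)
    (H : Matrix (Fin d) (Fin d) ℝ) (Wv : Matrix (Fin m) (Fin d) ℝ)
    (x : Fin p → Fin d → ℝ) (s : Fin nS → Fin d → ℝ) (i : Fin p) :
    let A : Fin p → ℝ := fun j =>
      exp (c * (x i ⬝ᵥ H.mulVec (x j))) / ∑ r, exp (c * (x i ⬝ᵥ H.mulVec (x r)))
    let D : ℝ := (∑ k, exp (c * (x i ⬝ᵥ H.mulVec (s k))))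
      + ∑ r, exp (c * (x i ⬝ᵥ H.mulVec (x r)))
    let AptS : Fin nS → ℝ := fun k => exp (c * (x i ⬝ᵥ H.mulVec (s k))) / D
    let Apt : Fin p → ℝ := fun j => exp (c * (x i ⬝ᵥ H.mulVec (x j))) / D
    let t : Fin m → ℝ := ∑ j, A j • Wv.mulVec (x j)
    let tpt : Fin m → ℝ := (∑ k, AptS k • Wv.mulVec (s k)) + ∑ j, Apt j • Wv.mulVec (x j)
    tpt = (∑ k, AptS k • Wv.mulVec (s k)) + (1 - ∑ k, AptS k) • t ∧
      tpt - t ∈ Submodule.span ℝ (insert t (Set.range fun k => Wv.mulVec (s k))) := by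
  have : Nonempty (Fin p) := ⟨i⟩
  simpa only [attention, softmax, Fintype.sum_sum_type, Sum.elim_inl, Sum.elim_inr,
    Sum.elim_comp_inl, Sum.elim_comp_inr] using
    long_prefix_biases_attention_output_general
      (Sum.elim (fun k => c * (x i ⬝ᵥ H *ᵥ s k)) fun j => c * (x i ⬝ᵥ H *ᵥ x j))
      (Sum.elim (fun k => Wv *ᵥ s k) fun j => Wv *ᵥ x j)
end
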